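/- In the DFA 𝒜_n (n even, n ≥ 10), if X ⊆ ℤ_n is such that ℤ_n \ X is a Π-predecessor of ℤ_n \ {n−1, n−2} (i.e., δ(ℤ_n \ X, a b^i) = ℤ_n \ {n−1, n−2} for some i ≥ 0), then the minimum element of X (with elements of ℤ_n identified with their representatives in {0,…,n−1}) is either n−3 or n−4. -/

import Mathlib

/-!
The word `a b^i` acts as `q ↦ δ_a(q) + i`, so the hypothesis says that the restriction of `δ_a` to
the complement of `X` has image `ℤ_n \ {-1 - i, -2 - i}`. The state `0` has no `δ_a`-preimage
(`deltaANat_ne_zero`), so `0 ∈ {-1 - i, -2 - i}`, i.e. `i = -1` or `i = -2` in `ℤ_n`.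
The two omitted values are then `{0, -1}` or `{0, 1}`, and the only preimages of `-1` and of `1` are
`n - 4` and `n - 3` respectively; that preimage must lie in `X`. Any other `q ∈ X` has an image that
is also attained outside `X`, and since `δ_a` identifies only `n - 2` with `n - 1`
(`deltaANat_inj`), `q ∈ {n - 2, n - 1}`. Hence the minimum of `X` is `n - 4` or `n - 3`.
-/

/-- The two-letter alphabet of a binary DFA. -/
inductive Letter where
  | a : Letter
  | b : Letter

/-- Left-to-right action of a word on `ZMod n`, where the letter `b` acts as `q ↦ q + 1`
(a cyclic permutation) and the letter `a` acts as the given map `δa`. -/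
def act {n : ℕ} (δa : ZMod n → ZMod n) : List Letter → ZMod n → ZMod n
  | [], q => q
  | Letter.a :: w, q => act δa w (δa q)
  | Letter.b :: w, q => act δa w (q + 1)

/-- A binary circular DFA is completely reachable if every nonempty subset of states
is the image of the full state set under the action of some word. -/
def CompletelyReachable {n : ℕ} (δa : ZMod n → ZMod n) : Prop :=
  ∀ S : Set (ZMod n), S.Nonempty → ∃ w : List Letter, act δa w '' Set.univ = S

/-- A binary circular DFA is standardized if `0` has no `δa`-preimage and `δa 0` is the
unique state with more than one `δa`-preimage. -/
def Standardized {n : ℕ} (δa : ZMod n → ZMod n) : Prop :=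
  (∀ q : ZMod n, δa q ≠ 0) ∧
  ∀ p : ZMod n, 1 < {q : ZMod n | δa q = p}.ncard ↔ p = δa 0

/-- The orbit `O(𝒜) = {δa^i(0) : i ≥ 1}`. -/
def orbitSet {n : ℕ} (δa : ZMod n → ZMod n) : Set (ZMod n) :=
  {q : ZMod n | ∃ i : ℕ, 1 ≤ i ∧ δa^[i] 0 = q}

/-- The orbit subgroup `K(𝒜)`: the subgroup of `(ZMod n, +)` generated by the orbit. -/
def orbitSubgroup {n : ℕ} (δa : ZMod n → ZMod n) : AddSubgroup (ZMod n) :=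
  AddSubgroup.closure (orbitSet δa)

/-- The action of the letter `a` in the DFA `𝒜_n` (for even `n ≥ 10`):
`0 ↦ n−3 ↦ 1 ↦ n−2 ↦ n/2 ↦ n−4 ↦ n−1 ↦ n/2`, all other states are fixed. -/
def deltaA (n : ℕ) : ZMod n → ZMod n := fun q =>
  if q = 0 then ((n - 3 : ℕ) : ZMod n)
  else if q = ((n - 3 : ℕ) : ZMod n) then 1
  else if q = 1 then ((n - 2 : ℕ) : ZMod n)
  else if q = ((n - 2 : ℕ) : ZMod n) then ((n / 2 : ℕ) : ZMod n)
  else if q = ((n / 2 : ℕ) : ZMod n) then ((n - 4 : ℕ) : ZMod n)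
  else if q = ((n - 4 : ℕ) : ZMod n) then ((n - 1 : ℕ) : ZMod n)
  else if q = ((n - 1 : ℕ) : ZMod n) then ((n / 2 : ℕ) : ZMod n)
  else q

/-- The map `deltaA n` read on the representatives `0, …, n - 1`. -/
def deltaANat (n m : ℕ) : ℕ :=
  if m = 0 then n - 3
  else if m = n - 3 then 1
  else if m = 1 then n - 2
  else if m = n - 2 then n / 2
  else if m = n / 2 then n - 4
  else if m = n - 4 then n - 1
  else if m = n - 1 then n / 2
  else m

lemma cast_eq_iff_of_lt {n x y : ℕ} (hx : x < n) (hy : y < n) :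
    ((x : ZMod n) = y) ↔ x = y := by
  rw [ZMod.natCast_eq_natCast_iff', Nat.mod_eq_of_lt hx, Nat.mod_eq_of_lt hy]

lemma deltaANat_lt {n m : ℕ} (hn : 10 ≤ n) (hm : m < n) : deltaANat n m < n := by
  unfold deltaANat; split_ifs <;> omega

lemma deltaA_cast {n m : ℕ} (hn : 10 ≤ n) (hm : m < n) :
    deltaA n (m : ZMod n) = (deltaANat n m : ZMod n) := by
  have h0 : ((m : ZMod n) = 0) ↔ m = 0 := by
    simpa using cast_eq_iff_of_lt hm (show 0 < n by omega)
  have h1 : ((m : ZMod n) = 1) ↔ m = 1 := by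
    simpa using cast_eq_iff_of_lt hm (show 1 < n by omega)
  simp only [deltaA, deltaANat, h0, h1, cast_eq_iff_of_lt hm (show n - 3 < n by omega),
    cast_eq_iff_of_lt hm (show n - 2 < n by omega), cast_eq_iff_of_lt hm (show n / 2 < n by omega),
    cast_eq_iff_of_lt hm (show n - 4 < n by omega), cast_eq_iff_of_lt hm (show n - 1 < n by omega)]
  split_ifs <;> simp

lemma deltaANat_ne_zero {n m : ℕ} (hn : 10 ≤ n) : deltaANat n m ≠ 0 := by
  unfold deltaANat; split_ifs <;> omega

set_option maxHeartbeats 2000000 in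
/-- The only pair of distinct states identified by `δ_a` is `{n - 2, n - 1}`. -/
lemma deltaANat_inj {n x y : ℕ} (hn : 10 ≤ n) (h : deltaANat n x = deltaANat n y) :
    x = y ∨ x = n - 2 ∨ x = n - 1 := by
  unfold deltaANat at h; split_ifs at h <;> omega

lemma act_replicate_b {n : ℕ} (δ : ZMod n → ZMod n) (i : ℕ) (q : ZMod n) :
    act δ (List.replicate i Letter.b) q = q + i := by
  induction i generalizing q with
  | zero => simp [act]
  | succ k ih =>
    rw [List.replicate_succ, act, ih]
    push_cast
    ring

/-- A set containing `c` whose other elements are `n - 2` or `n - 1` has minimum `c`, provided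
`c ≤ n - 2`. -/
lemma sInf_val_eq {n c : ℕ} (hn : 10 ≤ n) (hc : c ≤ n - 2) (X : Set (ZMod n))
    (hcX : (c : ZMod n) ∈ X)
    (hX : ∀ m < n, (m : ZMod n) ∈ X → m = c ∨ m = n - 2 ∨ m = n - 1) :
    sInf (ZMod.val '' X) = c := by
  have : NeZero n := ⟨by omega⟩
  refine IsLeast.csInf_eq ⟨⟨c, hcX, ZMod.val_cast_of_lt (by omega)⟩, ?_⟩
  rintro _ ⟨q, hq, rfl⟩
  have := hX q.val (ZMod.val_lt q) (by simpa using hq)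
  omega

/-- In `𝒜_n` (`n` even, `n ≥ 10`), if `ℤ_n \ X` is a `Π`-predecessor of
`ℤ_n \ {n−1, n−2}`, then the minimum representative of `X` is `n−3` or `n−4`. -/
theorem stmt15 (n : ℕ) (hn : 10 ≤ n) (hev : Even n)
    (X : Set (ZMod n)) (i : ℕ)
    (h : act (deltaA n) (Letter.a :: List.replicate i Letter.b) '' (Set.univ \ X) =
      Set.univ \ {((n - 1 : ℕ) : ZMod n), ((n - 2 : ℕ) : ZMod n)}) :
    sInf (ZMod.val '' X) = n - 3 ∨ sInf (ZMod.val '' X) = n - 4 := by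
  have : NeZero n := ⟨by omega⟩
  have hsub : ∀ k ≤ n, ((n - k : ℕ) : ZMod n) = -(k : ZMod n) := by
    intro k hk
    rw [Nat.cast_sub hk]; simp
  have key : ∀ p : ZMod n, (∃ m < n, (m : ZMod n) ∉ X ∧ (deltaANat n m : ZMod n) = p) ↔
      p + i ≠ -1 ∧ p + i ≠ -2 := by
    intro p
    have hp := Set.ext_iff.mp h (p + i)
    have e1 := hsub 1 (by omega)
    have e2 := hsub 2 (by omega)
    push_cast at e1 e2
    simp only [e1, e2, Set.mem_image, Set.mem_sdiff, Set.mem_univ, true_and, Set.mem_insert_iff,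
      Set.mem_singleton_iff, not_or, act, act_replicate_b, add_left_inj] at hp
    rw [← ne_eq, ← ne_eq] at hp
    rw [← hp]
    constructor
    · rintro ⟨m, hm, hmX, rfl⟩
      exact ⟨m, hmX, deltaA_cast hn hm⟩
    · rintro ⟨q, hq, rfl⟩
      refine ⟨q.val, ZMod.val_lt q, by simpa using hq, ?_⟩
      rw [← deltaA_cast hn (ZMod.val_lt q), ZMod.natCast_zmod_val]
  have hi : (i : ZMod n) = -1 ∨ (i : ZMod n) = -2 := by
    by_contra! hcon
    obtain ⟨m, hm, -, h0⟩ := (key 0).mpr (by simpa using hcon)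
    rw [← Nat.cast_zero, cast_eq_iff_of_lt (deltaANat_lt hn hm) (by omega)] at h0
    exact deltaANat_ne_zero hn h0
  -- It suffices to find a state `c` whose image is the nonzero omitted value `v`.
  have main : ∀ c v : ℕ, c ≤ n - 2 → v < n → deltaANat n c = v →
      (∀ p : ZMod n, (p + i = -1 ∨ p + i = -2) ↔ (p = 0 ∨ p = v)) →
      sInf (ZMod.val '' X) = c := by
    intro c v hc hv hcv hom
    refine sInf_val_eq hn hc X ?_ ?_
    · by_contra hcX
      have h1 := (key v).mp ⟨c, by omega, hcX, by rw [hcv]⟩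
      have h2 := (hom v).mpr (Or.inr rfl)
      tauto
    · intro m hm hmX
      by_cases hmv : deltaANat n m = v
      · exact deltaANat_inj hn (hmv.trans hcv.symm)
      · have hne : ¬ ((deltaANat n m : ZMod n) = 0 ∨ (deltaANat n m : ZMod n) = v) := by
          rw [cast_eq_iff_of_lt (deltaANat_lt hn hm) hv, ← Nat.cast_zero,
            cast_eq_iff_of_lt (deltaANat_lt hn hm) (by omega)]
          exact not_or.mpr ⟨deltaANat_ne_zero hn, hmv⟩
        rw [← hom, not_or] at hne
        obtain ⟨m', hm', hmX', he⟩ := (key _).mpr hne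
        rw [cast_eq_iff_of_lt (deltaANat_lt hn hm') (deltaANat_lt hn hm)] at he
        rcases deltaANat_inj hn he.symm with rfl | h'
        · exact absurd hmX hmX'
        · exact Or.inr h'
  rcases hi with hi | hi
  · right
    refine main (n - 4) (n - 1) (by omega) (by omega) ?_ ?_
    · unfold deltaANat; split_ifs <;> omega
    · intro p
      rw [hi, hsub 1 (by omega)]
      constructor
      · rintro (hp | hp)
        · left; linear_combination hp
        · right; push_cast; linear_combination hp
      · rintro (hp | hp)
        · left; linear_combination hp
        · right; push_cast at hp; linear_combination hp
  · left
    refine main (n - 3) 1 (by omega) (by omega) ?_ ?_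
    · unfold deltaANat; split_ifs <;> omega
    · intro p
      rw [hi]
      constructor
      · rintro (hp | hp)
        · right; push_cast; linear_combination hp
        · left; linear_combination hp
      · rintro (hp | hp)
        · right; linear_combination hp
        · left; push_cast at hp; linear_combination hp
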